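/- For every x with 0 < x < 1, arcsl'(x)/v'(x) = 1/(8·h(x⁴)), where v(x) = x·Φ(x⁴, 3/2, 1/4), arcsl'(x) = 1/√(1 − x⁴), and h(s) = √(1 − s)·∑_{k=0}^∞ s^k/√(4k + 1); consequently, since h is strictly decreasing on (0, 1), the quotient arcsl'/v' is strictly increasing on (0, 1). -/

import Mathlib

/-- The arc lemniscate sine function: `arcsl x = ∫₀ˣ dt / √(1 - t⁴)`. -/
noncomputable def arcsl (x : ℝ) : ℝ := ∫ t in (0:ℝ)..x, 1 / Real.sqrt (1 - t ^ 4)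

/-- The Lerch zeta function: `Φ(z, s, a) = ∑ₖ zᵏ / (k + a)ˢ`. -/
noncomputable def lerchPhi (z s a : ℝ) : ℝ := ∑' k : ℕ, z ^ k / ((k : ℝ) + a) ^ s

/-- The function `v x = x · Φ(x⁴, 3/2, 1/4)`. -/
noncomputable def vFun (x : ℝ) : ℝ := x * lerchPhi (x ^ 4) (3 / 2) (1 / 4)

/-- The function `h s = √(1 - s) · ∑ₖ sᵏ / √(4k + 1)`. -/
noncomputable def hFun (s : ℝ) : ℝ :=
  Real.sqrt (1 - s) * ∑' k : ℕ, s ^ k / Real.sqrt (4 * (k : ℝ) + 1)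

lemma aux_summable (a : ℕ → ℝ) (C : ℝ) (ha : ∀ k, |a k| ≤ C) (s : ℝ) (h0 : 0 < s) (h1 : s < 1) :
    Summable (fun k => a k * s ^ k) ∧ Summable (fun k : ℕ => a k * ((k : ℝ) * s ^ k)) := by
  have hn : ‖s‖ < 1 := by rwa [Real.norm_eq_abs, abs_of_pos h0]
  constructor
  · refine Summable.of_norm_bounded (g := fun k => C * s ^ k)
      ((summable_geometric_of_lt_one h0.le h1).mul_left C) ?_
    intro k
    rw [Real.norm_eq_abs, abs_mul, abs_of_pos (pow_pos h0 k)]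
    exact mul_le_mul_of_nonneg_right (ha k) (pow_pos h0 k).le
  · have h := (summable_pow_mul_geometric_of_norm_lt_one 1 hn).mul_left C
    refine Summable.of_norm_bounded h ?_
    intro k
    have : 0 ≤ (k : ℝ) * s ^ k := by positivity
    rw [Real.norm_eq_abs, abs_mul, abs_of_nonneg this, pow_one]
    exact mul_le_mul_of_nonneg_right (ha k) this

lemma aux_deriv (a : ℕ → ℝ) (C : ℝ) (ha : ∀ k, |a k| ≤ C) (s : ℝ) (h0 : 0 < s) (h1 : s < 1) :
    ∃ D, HasDerivAt (fun z : ℝ => ∑' k : ℕ, a k * z ^ k) D s ∧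
      s * D = ∑' k : ℕ, a k * ((k : ℝ) * s ^ k) := by
  obtain ⟨r, hr, hr1⟩ := exists_between h1
  have hr0 : 0 < r := h0.trans hr
  have hC : 0 ≤ C := (abs_nonneg _).trans (ha 0)
  have hn : ‖r‖ < 1 := by rwa [Real.norm_eq_abs, abs_of_pos hr0]
  have hpow : ∀ (z : ℝ) (k : ℕ), z * ((k : ℝ) * z ^ (k - 1)) = k * z ^ k := by
    intro z k
    rcases k with _ | k
    · simp
    · simp only [Nat.add_sub_cancel]; ring
  refine ⟨∑' k : ℕ, a k * ((k : ℝ) * s ^ (k - 1)), ?_, ?_⟩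
  · have hsum : Summable (fun k : ℕ => C * ((k : ℝ) * r ^ (k - 1))) := by
      have h := (summable_pow_mul_geometric_of_norm_lt_one 1 hn).mul_left (C * r⁻¹)
      refine h.congr ?_
      intro k
      rw [pow_one, ← hpow r k]
      field_simp
    refine hasDerivAt_tsum_of_isPreconnected (t := Set.Ioo 0 r)
      (g := fun k z => a k * z ^ k) (g' := fun k z => a k * ((k : ℝ) * z ^ (k - 1)))
      hsum isOpen_Ioo isPreconnected_Ioo (y₀ := s) (y := s) ?_ ?_ ⟨h0, hr⟩ (aux_summable a C ha s h0 h1).1 ⟨h0, hr⟩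
    · intro k y _
      exact (hasDerivAt_pow k y).const_mul (a k)
    · intro k y hy
      have h2 : 0 ≤ (k : ℝ) * y ^ (k - 1) := by have := hy.1; positivity
      rw [Real.norm_eq_abs, abs_mul, abs_of_nonneg h2]
      refine mul_le_mul (ha k) ?_ h2 hC
      exact mul_le_mul_of_nonneg_left (pow_le_pow_left₀ hy.1.le hy.2.le _) (Nat.cast_nonneg k)
  · rw [← tsum_mul_left]
    refine tsum_congr fun k => ?_
    rw [← hpow s k]; ring

lemma arcsl_deriv (x : ℝ) (h0 : 0 < x) (h1 : x < 1) :
    deriv arcsl x = 1 / Real.sqrt (1 - x ^ 4) := by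
  have hc : ∀ t ∈ Set.Ioo (-1 : ℝ) 1,
      ContinuousAt (fun t : ℝ => 1 / Real.sqrt (1 - t ^ 4)) t := by
    intro t ht
    have : 0 < 1 - t ^ 4 := by
      have h2 : t ^ 2 < 1 := by nlinarith [ht.1, ht.2]
      nlinarith [sq_nonneg t]
    refine ContinuousAt.div continuousAt_const (by fun_prop) (Real.sqrt_pos.2 this).ne'
  have hx : x ∈ Set.Ioo (-1 : ℝ) 1 := ⟨by linarith, h1⟩
  have hi : IntervalIntegrable (fun t : ℝ => 1 / Real.sqrt (1 - t ^ 4))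
      MeasureTheory.volume 0 x := by
    apply ContinuousOn.intervalIntegrable
    intro t ht
    rw [Set.uIcc_of_le h0.le] at ht
    exact (hc t ⟨by linarith [ht.1], by linarith [ht.2]⟩).continuousWithinAt
  have hm : StronglyMeasurableAtFilter (fun t : ℝ => 1 / Real.sqrt (1 - t ^ 4)) (nhds x)
      MeasureTheory.volume :=
    ContinuousAt.stronglyMeasurableAtFilter isOpen_Ioo hc x hx
  exact (intervalIntegral.integral_hasDerivAt_right hi hm (hc x hx)).deriv

lemma a_bound (k : ℕ) : |1 / Real.sqrt (4 * (k : ℝ) + 1)| ≤ 1 := by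
  have : 1 ≤ Real.sqrt (4 * (k : ℝ) + 1) := by
    rw [Real.one_le_sqrt]; linarith [Nat.cast_nonneg (α := ℝ) k]
  rw [abs_of_nonneg (by positivity)]
  exact (div_le_one (by linarith)).2 this

lemma b_eq (k : ℕ) : (4 * (k : ℝ) + 1) * (1 / ((k : ℝ) + 1 / 4) ^ (3 / 2 : ℝ)) =
    8 * (1 / Real.sqrt (4 * (k : ℝ) + 1)) := by
  have hp : (0 : ℝ) < (k : ℝ) + 1 / 4 := by positivity
  have h1 : ((k : ℝ) + 1 / 4) ^ (3 / 2 : ℝ) = ((k : ℝ) + 1 / 4) * Real.sqrt ((k : ℝ) + 1 / 4) := by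
    rw [Real.sqrt_eq_rpow, show (3 / 2 : ℝ) = 1 + 1 / 2 by norm_num, Real.rpow_add hp,
      Real.rpow_one]
  have h2 : Real.sqrt (4 * (k : ℝ) + 1) = 2 * Real.sqrt ((k : ℝ) + 1 / 4) := by
    rw [show 4 * (k : ℝ) + 1 = 2 ^ 2 * ((k : ℝ) + 1 / 4) by ring,
      Real.sqrt_mul (by norm_num), Real.sqrt_sq (by norm_num)]
  have h3 := Real.sqrt_pos.2 hp
  rw [h1, h2, show 4 * (k : ℝ) + 1 = 4 * ((k : ℝ) + 1 / 4) by ring]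
  generalize Real.sqrt ((k : ℝ) + 1 / 4) = w at *
  generalize (k : ℝ) + 1 / 4 = y at *
  field_simp
  norm_num

lemma b_bound (k : ℕ) : |1 / ((k : ℝ) + 1 / 4) ^ (3 / 2 : ℝ)| ≤ 8 := by
  have h := b_eq k
  have h2 := (le_abs_self _).trans (a_bound k)
  have h3 : 0 ≤ 1 / ((k : ℝ) + 1 / 4) ^ (3 / 2 : ℝ) := by positivity
  rw [abs_of_nonneg h3]
  have h4 : (0 : ℝ) ≤ k := Nat.cast_nonneg k
  nlinarith [mul_nonneg h4 h3]

lemma vFun_deriv (x : ℝ) (h0 : 0 < x) (h1 : x < 1) :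
    deriv vFun x = 8 * ∑' k : ℕ, (x ^ 4) ^ k / Real.sqrt (4 * (k : ℝ) + 1) := by
  have hs0 : 0 < x ^ 4 := by positivity
  have hs1 : x ^ 4 < 1 := pow_lt_one₀ h0.le h1 (by norm_num)
  obtain ⟨D, hD, hsD⟩ := aux_deriv _ 8 b_bound (x ^ 4) hs0 hs1
  obtain ⟨hS1, hS2⟩ := aux_summable _ 8 b_bound (x ^ 4) hs0 hs1
  have hv : vFun = fun x : ℝ => x * (fun z : ℝ => ∑' k : ℕ,
      1 / ((k : ℝ) + 1 / 4) ^ (3 / 2 : ℝ) * z ^ k) (x ^ 4) := by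
    funext y
    simp only [vFun, lerchPhi]
    congr 1
    exact tsum_congr fun k => by ring
  have hp : HasDerivAt (fun y : ℝ => y ^ 4) (4 * x ^ 3) x := by
    simpa using hasDerivAt_pow 4 x
  have hc := HasDerivAt.comp (h := fun y : ℝ => y ^ 4) x hD hp
  have hd := (hasDerivAt_id x).mul hc
  have := hd.deriv
  rw [hv]
  refine Eq.trans this ?_
  simp only [id, Function.comp]
  have e : x * (D * (4 * x ^ 3)) = 4 * (x ^ 4 * D) := by ring
  rw [e, hsD, one_mul, ← tsum_mul_left, ← hS1.tsum_add (hS2.mul_left 4), ← tsum_mul_left]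
  refine tsum_congr fun k => ?_
  have := b_eq k
  linear_combination (x ^ 4) ^ k * this

lemma coeff_lt (k : ℕ) : ((k : ℝ) + 1) * (1 / Real.sqrt (4 * ((k + 1 : ℕ) : ℝ) + 1)) <
    ((k : ℝ) + 1 / 2) * (1 / Real.sqrt (4 * (k : ℝ) + 1)) := by
  have hk : (0 : ℝ) ≤ k := Nat.cast_nonneg k
  have hA : 0 < Real.sqrt (4 * ((k + 1 : ℕ) : ℝ) + 1) := Real.sqrt_pos.2 (by positivity)
  have hB : 0 < Real.sqrt (4 * (k : ℝ) + 1) := Real.sqrt_pos.2 (by positivity)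
  rw [mul_one_div, mul_one_div, div_lt_div_iff₀ hA hB]
  refine lt_of_pow_lt_pow_left₀ 2 (by positivity) ?_
  rw [mul_pow, mul_pow, Real.sq_sqrt (by positivity), Real.sq_sqrt (by positivity)]
  push_cast
  nlinarith

lemma hFun_anti : StrictAntiOn hFun (Set.Ioo (0 : ℝ) 1) := by
  have key : ∀ s ∈ Set.Ioo (0 : ℝ) 1, ∃ D < 0, HasDerivAt hFun D s := by
    rintro s ⟨h0, h1⟩
    obtain ⟨D, hD, hsD⟩ := aux_deriv _ 1 a_bound s h0 h1
    obtain ⟨hS1, hS2⟩ := aux_summable _ 1 a_bound s h0 h1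
    have hv : hFun = fun z : ℝ => Real.sqrt (1 - z) * ∑' k : ℕ,
        1 / Real.sqrt (4 * (k : ℝ) + 1) * z ^ k := by
      funext y
      simp only [hFun]
      congr 1
      exact tsum_congr fun k => by ring
    have h1s : 0 < 1 - s := by linarith
    have hw := Real.sqrt_pos.2 h1s
    have hq : HasDerivAt (fun z : ℝ => Real.sqrt (1 - z)) (-1 / (2 * Real.sqrt (1 - s))) s :=
      ((hasDerivAt_id s).const_sub 1).sqrt h1s.ne'
    have hm := hq.mul hD
    rw [hv]
    refine ⟨_, ?_, hm⟩
    -- the main inequality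
    have hmain : (1 - s) * (s * D) <
        s * (1 / 2 * ∑' k : ℕ, 1 / Real.sqrt (4 * (k : ℝ) + 1) * s ^ k) := by
      have hsh := (summable_nat_add_iff 1).2 hS2
      have e1 : s * D = ∑' k : ℕ, 1 / Real.sqrt (4 * ((k + 1 : ℕ) : ℝ) + 1) *
          (((k + 1 : ℕ) : ℝ) * s ^ (k + 1)) := by
        rw [hsD, hS2.tsum_eq_zero_add]; simp
      have e2 : (1 - s) * (s * D) = s * D - s * (s * D) := by ring
      rw [e2]
      nth_rewrite 2 [hsD]
      rw [e1, sub_lt_iff_lt_add, ← mul_add, ← tsum_mul_left, ← (hS1.mul_left (1 / 2)).tsum_add hS2,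
        ← tsum_mul_left]
      have hle : ∀ k : ℕ, 1 / Real.sqrt (4 * ((k + 1 : ℕ) : ℝ) + 1) *
          (((k + 1 : ℕ) : ℝ) * s ^ (k + 1)) <
          s * (1 / 2 * (1 / Real.sqrt (4 * (k : ℝ) + 1) * s ^ k) +
            1 / Real.sqrt (4 * (k : ℝ) + 1) * ((k : ℝ) * s ^ k)) := by
        intro k
        have := mul_lt_mul_of_pos_right (coeff_lt k) (pow_pos h0 (k + 1))
        calc _ = ((k : ℝ) + 1) * (1 / Real.sqrt (4 * ((k + 1 : ℕ) : ℝ) + 1)) * s ^ (k + 1) := by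
              push_cast; ring
          _ < _ := this
          _ = _ := by ring
      exact Summable.tsum_lt_tsum (i := 0) (fun k => (hle k).le) (hle 0) hsh
        (((hS1.mul_left (1 / 2)).add hS2).mul_left s)
    generalize (∑' k : ℕ, 1 / Real.sqrt (4 * (k : ℝ) + 1) * s ^ k) = F at *
    have h3 : (1 - s) * D < 1 / 2 * F := by
      refine lt_of_mul_lt_mul_left ?_ h0.le
      linarith
    have h4 : -1 / (2 * Real.sqrt (1 - s)) * F + Real.sqrt (1 - s) * D =
        ((1 - s) * D - 1 / 2 * F) / Real.sqrt (1 - s) := by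
      have h5 := Real.mul_self_sqrt h1s.le
      nth_rewrite 3 [← h5]
      field_simp
      ring
    rw [h4]
    exact div_neg_of_neg_of_pos (by linarith) hw
  refine strictAntiOn_of_deriv_neg (convex_Ioo 0 1) ?_ ?_
  · intro s hs
    obtain ⟨D, _, h⟩ := key s hs
    exact h.continuousAt.continuousWithinAt
  · intro s hs
    rw [interior_Ioo] at hs
    obtain ⟨D, hD, h⟩ := key s hs
    rwa [h.deriv]

lemma hFun_pos (s : ℝ) (h0 : 0 < s) (h1 : s < 1) : 0 < hFun s := by
  obtain ⟨hS1, -⟩ := aux_summable _ 1 a_bound s h0 h1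
  refine mul_pos (Real.sqrt_pos.2 (by linarith)) ?_
  have hS : Summable (fun k : ℕ => s ^ k / Real.sqrt (4 * (k : ℝ) + 1)) :=
    hS1.congr fun k => by ring
  exact hS.tsum_pos (fun k => by positivity) 0 (by simp)

theorem deriv_ratio_eq_and_strictMono :
    (∀ x : ℝ, 0 < x → x < 1 →
        deriv arcsl x = 1 / Real.sqrt (1 - x ^ 4) ∧
        deriv arcsl x / deriv vFun x = 1 / (8 * hFun (x ^ 4))) ∧
      StrictMonoOn (fun x => deriv arcsl x / deriv vFun x) (Set.Ioo (0 : ℝ) 1) := by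
  have main : ∀ x : ℝ, 0 < x → x < 1 →
        deriv arcsl x = 1 / Real.sqrt (1 - x ^ 4) ∧
        deriv arcsl x / deriv vFun x = 1 / (8 * hFun (x ^ 4)) := by
    intro x h0 h1
    refine ⟨arcsl_deriv x h0 h1, ?_⟩
    rw [arcsl_deriv x h0 h1, vFun_deriv x h0 h1, hFun, div_div]
    congr 1
    ring
  refine ⟨main, ?_⟩
  intro x hx y hy hxy
  have hx4 : x ^ 4 ∈ Set.Ioo (0 : ℝ) 1 :=
    ⟨pow_pos hx.1 4, pow_lt_one₀ hx.1.le hx.2 (by norm_num)⟩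
  have hy4 : y ^ 4 ∈ Set.Ioo (0 : ℝ) 1 :=
    ⟨pow_pos hy.1 4, pow_lt_one₀ hy.1.le hy.2 (by norm_num)⟩
  have hlt := hFun_anti hx4 hy4 (pow_lt_pow_left₀ hxy hx.1.le (by norm_num))
  have hp := hFun_pos _ hy4.1 hy4.2
  simp only [(main x hx.1 hx.2).2, (main y hy.1 hy.2).2]
  exact one_div_lt_one_div_of_lt (by linarith) (by linarith)
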